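/- Suppose σ0(w) = σ0 > 0 is constant. Let v : [0,T] → ℝ be continuous, let z : [0,T] → ℝ solve the lumped FrBD bristle ODE with z(0) = z₀, define the bristle force F_b(t) := p·(σ0 z(t) + σ1(v(t)) ż(t)) with p > 0, set Σ0 := σ0 p and W(z) := (Σ0/2) z². Then the passivity inequality ∫_0^t F_b(t') v(t') dt' ≥ W(z(t)) - W(z₀) holds for all t ∈ [0,T]. -/

import Mathlib

open Set intervalIntegral

/-!
Substituting the bristle equation into the force collapses it to `p (μ / g) (σ0 z + σ1 v)`, because
`g = σ1 |v|_ε + μ`. Hence the supplied power exceeds the rate of change of the stored energy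
`(σ0 p / 2) z²` by exactly `p (σ1 μ v² + σ0² |v|_ε z²) / g ≥ 0`, and integrating in time gives
passivity. Nothing here is scalar: `z` and `v` may take values in any real inner product space, and
any nonnegative continuous function of the velocity may replace `|·|_ε`.
-/

section Bristle

open scoped RealInnerProductSpace

variable {E : Type*} [NormedAddCommGroup E] [InnerProductSpace ℝ E]

/-- The right-hand side `ż` of the bristle equation at bristle state `z` and velocity `v`. The
numbers `r`, `μ` and `g` are the values at `v` of the regularized speed, of the friction coefficient
and of `σ1 r + μ`; the last relation is left to the lemmas that use it. -/
noncomputable def bristleRate (σ0 r μ g : ℝ) (z v : E) : E := -(σ0 * r / g) • z + (μ / g) • v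

/-- The bristle force `F_b = p (σ0 z + σ1 ż)` for normal load `p`, with `z'` standing for `ż`. -/
def bristleForce (p σ0 σ1 : ℝ) (z z' : E) : E := p • (σ0 • z + σ1 • z')

/-- The elastic energy `W` stored by a bristle of stiffness `k` and deflection `z`. -/
noncomputable def bristleEnergy (k : ℝ) (z : E) : ℝ := k / 2 * ‖z‖ ^ 2

lemma bristleForce_bristleRate {p σ0 σ1 r μ g : ℝ} (hg : g = σ1 * r + μ) (hg0 : g ≠ 0) (z v : E) :
    bristleForce p σ0 σ1 z (bristleRate σ0 r μ g z v) = (p * (μ / g)) • (σ0 • z + σ1 • v) := by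
  have elastic_coeff : σ0 - σ1 * (σ0 * r / g) = μ / g * σ0 := by
    field_simp
    rw [hg]
    ring
  calc
    _ = p • ((σ0 - σ1 * (σ0 * r / g)) • z + (μ / g * σ1) • v) := by
      simp only [bristleForce, bristleRate]
      module
    _ = _ := by
      rw [elastic_coeff]
      module

lemma inner_bristleForce_eq_add_dissipation {p σ0 σ1 r μ g : ℝ} (hg : g = σ1 * r + μ)
    (hg0 : g ≠ 0) (z v : E) :
    ⟪bristleForce p σ0 σ1 z (bristleRate σ0 r μ g z v), v⟫ =
      σ0 * p * ⟪z, bristleRate σ0 r μ g z v⟫ +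
        p * ((σ1 * μ * ‖v‖ ^ 2 + σ0 ^ 2 * r * ‖z‖ ^ 2) / g) := by
  rw [bristleForce_bristleRate hg hg0]
  simp only [bristleRate, inner_add_left, inner_add_right, real_inner_smul_left,
    real_inner_smul_right, real_inner_self_eq_norm_sq]
  ring

lemma mul_inner_bristleRate_le_inner_bristleForce {p σ0 σ1 r μ g : ℝ} (hp : 0 ≤ p) (hσ1 : 0 ≤ σ1)
    (hr : 0 ≤ r) (hμ : 0 ≤ μ) (hg : g = σ1 * r + μ) (hg0 : g ≠ 0) (z v : E) :
    σ0 * p * ⟪z, bristleRate σ0 r μ g z v⟫ ≤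
      ⟪bristleForce p σ0 σ1 z (bristleRate σ0 r μ g z v), v⟫ := by
  have g_nonneg : 0 ≤ g := by rw [hg]; positivity
  rw [inner_bristleForce_eq_add_dissipation hg hg0]
  exact le_add_of_nonneg_right (by positivity)

lemma hasDerivWithinAt_bristleEnergy {k t : ℝ} {z : ℝ → E} {z' : E} {s : Set ℝ}
    (hz : HasDerivWithinAt z z' s t) :
    HasDerivWithinAt (fun t ↦ bristleEnergy k (z t)) (k * ⟪z t, z'⟫) s t :=
  (hz.norm_sq.const_mul (k / 2)).congr_deriv (by ring)

lemma bristleEnergy_sub_le_integral {a b k : ℝ} (hab : a ≤ b) {z z' : ℝ → E} {power : ℝ → ℝ}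
    (hz : ∀ t ∈ Icc a b, HasDerivWithinAt z (z' t) (Icc a b) t)
    (h_power : ContinuousOn power (Icc a b)) (hle : ∀ t ∈ Icc a b, k * ⟪z t, z' t⟫ ≤ power t) :
    bristleEnergy k (z b) - bristleEnergy k (z a) ≤ ∫ t in a..b, power t := by
  have energy_deriv t (ht : t ∈ Icc a b) := hasDerivWithinAt_bristleEnergy (k := k) (hz t ht)
  refine sub_le_integral_of_hasDeriv_right_of_le hab
    (fun t ht ↦ (energy_deriv t ht).continuousWithinAt) (fun t ht ↦ ?_)
    h_power.integrableOn_Icc (fun t ht ↦ hle t (Ioo_subset_Icc_self ht))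
  exact ((energy_deriv t (Ioo_subset_Icc_self ht)).hasDerivAt
    (Icc_mem_nhds ht.1 ht.2)).hasDerivWithinAt

lemma continuousOn_inner_bristleForce {p σ0 : ℝ} {r μ σ1 g : E → ℝ} (hr : Continuous r)
    (hμ : Continuous μ) (hσ1 : Continuous σ1) (hg : ∀ w, g w = σ1 w * r w + μ w)
    (hg0 : ∀ w, g w ≠ 0) {v z : ℝ → E} {s : Set ℝ} (hv : ContinuousOn v s)
    (hz : ContinuousOn z s) :
    ContinuousOn (fun t ↦ ⟪bristleForce p σ0 (σ1 (v t)) (z t)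
      (bristleRate σ0 (r (v t)) (μ (v t)) (g (v t)) (z t) (v t)), v t⟫) s := by
  have g_cont : Continuous g := by
    rw [funext hg]
    fun_prop
  have coeff_cont : Continuous fun w ↦ p * (μ w / g w) :=
    continuous_const.mul (hμ.div g_cont hg0)
  simp only [bristleForce_bristleRate (hg _) (hg0 _)]
  exact ((coeff_cont.comp_continuousOn hv).smul
    ((hz.const_smul σ0).add ((hσ1.comp_continuousOn hv).smul hv))).inner hv

theorem frbd_lumped_passivity_general {T σ0 p : ℝ} (hT : 0 < T) (hp : 0 ≤ p) {r μ σ1 g : E → ℝ}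
    (hr : Continuous r) (hr_nonneg : ∀ w, 0 ≤ r w)
    (hμ : Continuous μ) (hμ_nonneg : ∀ w, 0 ≤ μ w)
    (hσ1 : Continuous σ1) (hσ1_nonneg : ∀ w, 0 ≤ σ1 w)
    (hg : ∀ w, g w = σ1 w * r w + μ w) (hg0 : ∀ w, g w ≠ 0)
    {v z : ℝ → E} (hv : ContinuousOn v (Icc 0 T))
    (hODE : ∀ t ∈ Icc 0 T, HasDerivWithinAt z
      (bristleRate σ0 (r (v t)) (μ (v t)) (g (v t)) (z t) (v t)) (Icc 0 T) t) :
    ∀ t ∈ Icc 0 T, bristleEnergy (σ0 * p) (z t) - bristleEnergy (σ0 * p) (z 0) ≤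
      ∫ s in (0 : ℝ)..t,
        ⟪bristleForce p σ0 (σ1 (v s)) (z s) (derivWithin z (Icc 0 T) s), v s⟫ := by
  intro t ht
  have hsub : Icc 0 t ⊆ Icc 0 T := Icc_subset_Icc_right ht.2
  have rate_eq s (hs : s ∈ Icc 0 T) := (hODE s hs).derivWithin (uniqueDiffOn_Icc hT s hs)
  have z_cont : ContinuousOn z (Icc 0 T) := fun s hs ↦ (hODE s hs).continuousWithinAt
  have power_cont := continuousOn_inner_bristleForce (p := p) (σ0 := σ0) hr hμ hσ1 hg hg0 hv z_cont
  refine bristleEnergy_sub_le_integral ht.1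
    (fun s hs ↦ (hODE s (hsub hs)).differentiableWithinAt.hasDerivWithinAt.mono hsub)
    ((power_cont.congr fun s hs ↦ by rw [rate_eq s hs]).mono hsub) fun s hs ↦ ?_
  rw [rate_eq s (hsub hs)]
  exact mul_inner_bristleRate_le_inner_bristleForce hp (hσ1_nonneg _) (hr_nonneg _) (hμ_nonneg _)
    (hg _) (hg0 _) _ _

end Bristle

/-- Passivity of the lumped FrBD model with constant micro-stiffness `σ0 > 0`: along any
solution `z` of the bristle ODE on `[0,T]` with `z(0) = z₀`, the bristle force
`F_b = p (σ0 z + σ1(v) ż)` satisfies `∫_0^t F_b v ≥ W(z(t)) - W(z₀)` where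
`W(z) = (Σ0/2) z²` and `Σ0 = σ0 p`. -/
theorem frbd_lumped_passivity
    (T ε μmin σ0 p : ℝ) (hT : 0 < T) (hε : 0 < ε) (hμmin : 0 < μmin)
    (hσ0 : 0 < σ0) (hp : 0 < p)
    (μ σ1 : ℝ → ℝ)
    (hμ : ContDiff ℝ 1 μ) (hμlb : ∀ w, μmin ≤ μ w)
    (hσ1 : ContDiff ℝ 1 σ1) (hσ1nn : ∀ w, 0 ≤ σ1 w)
    (g : ℝ → ℝ) (hg : ∀ w, g w = σ1 w * Real.sqrt (w ^ 2 + ε) + μ w)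
    (v : ℝ → ℝ) (hv : ContinuousOn v (Icc 0 T))
    (z : ℝ → ℝ) (z₀ : ℝ) (hz0 : z 0 = z₀)
    (hODE : ∀ t ∈ Icc 0 T,
      HasDerivWithinAt z
        (-(σ0 * Real.sqrt ((v t) ^ 2 + ε) / g (v t)) * z t
          + (μ (v t) / g (v t)) * v t) (Icc 0 T) t)
    (Fb : ℝ → ℝ)
    (hFb : ∀ t, Fb t = p * (σ0 * z t + σ1 (v t) * derivWithin z (Icc 0 T) t))
    (Sigma0 : ℝ) (hSigma0 : Sigma0 = σ0 * p)
    (W : ℝ → ℝ) (hW : ∀ x, W x = Sigma0 / 2 * x ^ 2) :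
    ∀ t ∈ Icc 0 T, W (z t) - W z₀ ≤ ∫ s in (0 : ℝ)..t, Fb s * v s := by
  have hμpos w : 0 < μ w := hμmin.trans_le (hμlb w)
  have hg_ne w : g w ≠ 0 := by
    have := hσ1nn w
    have := hμpos w
    rw [hg]
    positivity
  simpa [bristleEnergy, bristleForce, hW, hFb, hSigma0, hz0, mul_comm (v _)] using
    frbd_lumped_passivity_general hT hp.le (r := fun w ↦ √(w ^ 2 + ε)) (by fun_prop)
      (fun _ ↦ Real.sqrt_nonneg _) hμ.continuous (fun w ↦ (hμpos w).le) hσ1.continuous hσ1nn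
      hg hg_ne hv hODE
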